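/- Let (J,Q,1) be a weak quadratic Jordan division algebra over a field k, let a ∈ J be invertible and b ∈ J. Then the map δ := Q^a_{a,b} = Q_a^{-1} Q_{a,b} is an anti-derivation of the a-isotope J^a, i.e., δ(x·Q^a_y) = −δ(x)·Q^a_y + x·Q^a_{y,δ(y)} for all x,y ∈ J. -/

import Mathlib

/-!
Passing to the `a`-isotope, itself a weak quadratic Jordan division algebra with unit `a`, reduces
the claim to `a = 1`, where `δ = V_b = Q_{1,b}`. Write `x ∘ y` for `y·V_x`. In left-operator
notation the claim is the linear part of the fundamental formula at `(1, b)`,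

  `Q_{y, y ∘ b} = V_b Q_y + Q_y V_b`.

Over fields with two or three elements this cannot be read off `QJ3` by polarization. It follows
instead from two identities:

* `QJ2LinOne`: `Q_c x ∘ b + Q_{c, c ∘ x} b = Q_c (b ∘ x) + c ∘ Q_{b,x} c`, the polarization of
  `QJ2` at `(c, 1)`;
* `SquareRule`: `V_y² = V_{y²} + 2 Q_y`. Polarized and applied in the `c`-isotope it gives
  `squareRule_isotope`: `Q_{c, c ∘ b} x + 2 (Q_c b ∘ x) = c ∘ Q_{b,x} c + Q_{c, c ∘ x} b`.

Adding the isotope identity to `QJ2LinOne` and eliminating `2 (Q_c b ∘ x)` with the copy of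
`QJ2LinOne` in which `b` and `x` are exchanged gives the claim.

If `2 ≠ 0`, then `QJ2LinOne` results from comparing `QJ2` at `1 + c` and `1 - c`, and the square
rule is a special case of it. If `2 = 0`, the square rule is `Q_{(1+y)²} = Q_{1+y}²`, and computing
`Q_{b + b⁻¹}` in two ways gives `V_{b,b} = V_{b²}` (`V_self`). The polarizations of these two facts
show that one of the two homogeneous parts of `QJ2` at `1 + c` vanishes, hence so does the other,
which is `QJ2LinOne`.
-/

/-- A weak quadratic Jordan algebra `(J, Q, 1)` over a field `k`.
Endomorphisms act on the right: `x·Q_a` is `Q a x`; a paper product `A B`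
(apply `A`, then `B`) corresponds to the Mathlib product `B * A`. -/
structure WeakQuadraticJordan (k J : Type*) [Field k] [AddCommGroup J]
    [Module k J] where
  Q : J → Module.End k J
  one : J
  one_ne_zero : one ≠ 0
  Q_smul : ∀ (t : k) (a : J), Q (t • a) = (t ^ 2) • Q a
  Qbil : J →ₗ[k] J →ₗ[k] Module.End k J
  Qbil_apply : ∀ a b : J, Qbil a b = Q (a + b) - Q a - Q b
  QJ1 : Q one = 1
  QJ2 : ∀ a b x : J, Qbil a (Q a x) b = Q a (Qbil b x a)
  QJ3 : ∀ a b : J, Q (Q a b) = Q a * Q b * Q a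

namespace WeakQuadraticJordan

variable {k J : Type*} [Field k] [AddCommGroup J] [Module k J]

/-- `V W a b` is the endomorphism `V_{a,b} : x ↦ b·Q_{a,x}`. -/
def V (W : WeakQuadraticJordan k J) (a b : J) : Module.End k J where
  toFun x := W.Qbil a x b
  map_add' x y := by simp
  map_smul' t x := by simp

/-- `δ` is an `ε`-derivation: `δ(a·Q_b) = ε·δ(a)·Q_b + a·Q_{b,δ(b)}`. -/
def IsEpsDerivation (W : WeakQuadraticJordan k J) (ε : k) (δ : Module.End k J) : Prop :=
  ∀ a b : J, δ (W.Q b a) = ε • W.Q b (δ a) + W.Qbil b (δ b) a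

/-- Every nonzero element is invertible (`Q_a` is a unit of `End k J`). -/
def IsDivision (W : WeakQuadraticJordan k J) : Prop :=
  ∀ a : J, a ≠ 0 → IsUnit (W.Q a)

end WeakQuadraticJordan


namespace WeakQuadraticJordan

variable {k J : Type*} [Field k] [AddCommGroup J] [Module k J]

/-! ### Formal consequences of the axioms -/

theorem Q_add (W : WeakQuadraticJordan k J) (a b z : J) :
    W.Q (a + b) z = W.Q a z + W.Q b z + W.Qbil a b z := by
  rw [W.Qbil_apply]; simp

theorem Q_zero (W : WeakQuadraticJordan k J) : W.Q 0 = 0 := by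
  simpa using W.Q_smul 0 0

theorem Q_neg (W : WeakQuadraticJordan k J) (a : J) : W.Q (-a) = W.Q a := by
  simpa using W.Q_smul (-1) a

theorem Qbil_comm (W : WeakQuadraticJordan k J) (a b z : J) :
    W.Qbil a b z = W.Qbil b a z := by
  rw [W.Qbil_apply, W.Qbil_apply, add_comm b a]; simp only [LinearMap.sub_apply]; abel

theorem Qbil_self (W : WeakQuadraticJordan k J) (a z : J) :
    W.Qbil a a z = (2 : k) • W.Q a z := by
  have h := W.Q_smul 2 a
  rw [W.Qbil_apply, ← two_smul k a, h]
  simp only [LinearMap.sub_apply, LinearMap.smul_apply]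
  module

theorem QJ3_apply (W : WeakQuadraticJordan k J) (a b z : J) :
    W.Q (W.Q a b) z = W.Q a (W.Q b (W.Q a z)) := by
  rw [W.QJ3]; rfl

/-- Polarization of the fundamental formula in its inner variable. -/
theorem QJ3_bil (W : WeakQuadraticJordan k J) (a b c z : J) :
    W.Qbil (W.Q a b) (W.Q a c) z = W.Q a (W.Qbil b c (W.Q a z)) := by
  rw [W.Qbil_apply, W.Qbil_apply, ← map_add]
  simp only [LinearMap.sub_apply, QJ3_apply, map_sub]

theorem Q_one_apply (W : WeakQuadraticJordan k J) (x : J) : W.Q W.one x = x := by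
  rw [W.QJ1]; rfl

/-- `V_{1,b} = V_{b,1}`. -/
theorem Qbil_one (W : WeakQuadraticJordan k J) (x b : J) :
    W.Qbil W.one x b = W.Qbil b x W.one := by
  simpa [Q_one_apply] using W.QJ2 W.one b x

/-- The product `x ∘ b = x·Q_{1,b}` is commutative. -/
theorem circ_comm (W : WeakQuadraticJordan k J) (x b : J) :
    W.Qbil W.one x b = W.Qbil W.one b x := by
  rw [Qbil_one, Qbil_one, Qbil_comm]

theorem circ_one (W : WeakQuadraticJordan k J) (x : J) :
    W.Qbil W.one x W.one = (2 : k) • x := by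
  rw [circ_comm, Qbil_self, Q_one_apply]

/-- `V_b` commutes with `Q_b`. -/
theorem circ_Q_comm (W : WeakQuadraticJordan k J) (b x : J) :
    W.Qbil W.one b (W.Q b x) = W.Q b (W.Qbil W.one b x) := by
  have h := W.QJ2 b W.one x
  rw [circ_comm, Qbil_one, h, circ_comm]

/-- The failure of the polarization of `QJ2` (cubic in `a`) in degree `(2,1)` is antisymmetric. -/
theorem QJ2_lin_antisymm (W : WeakQuadraticJordan k J) (a e b x : J) :
    (W.Qbil e (W.Q a x) b + W.Qbil a (W.Qbil a e x) b
        - W.Q a (W.Qbil b x e) - W.Qbil a e (W.Qbil b x a))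
      + (W.Qbil a (W.Q e x) b + W.Qbil e (W.Qbil a e x) b
        - W.Q e (W.Qbil b x a) - W.Qbil a e (W.Qbil b x e)) = 0 := by
  have h := W.QJ2 (a + e) b x
  have h1 := W.QJ2 a b x
  have h2 := W.QJ2 e b x
  simp only [Q_add, map_add, LinearMap.add_apply] at h
  linear_combination (norm := module) h - h1 - h2

/-! ### The square rule and the polarization of `QJ2` at `(c, 1)` -/

/-- `V_y² = V_{y²} + 2 Q_y`, where `y² = 1·Q_y`. -/
def SquareRule (W : WeakQuadraticJordan k J) : Prop :=
  ∀ y x : J, W.Qbil W.one y (W.Qbil W.one y x)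
    = W.Qbil W.one (W.Q y W.one) x + (2 : k) • W.Q y x

/-- The polarization of `QJ2` in degree `(2,1)` at `(c, 1)`. -/
def QJ2LinOne (W : WeakQuadraticJordan k J) : Prop :=
  ∀ c b x : J, W.Qbil W.one (W.Q c x) b + W.Qbil c (W.Qbil W.one c x) b
    = W.Q c (W.Qbil W.one b x) + W.Qbil W.one c (W.Qbil b x c)

/-- If `2 ≠ 0`, the substitution `c ↦ -c` separates the `c`-degrees 1 and 2. -/
theorem qj2LinOne_of_two_ne_zero (W : WeakQuadraticJordan k J) (h2 : (2 : k) ≠ 0) :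
    W.QJ2LinOne := by
  intro c b x
  have h := W.QJ2_lin_antisymm c W.one b x
  have hfst := W.QJ2_lin_antisymm (-c) W.one b x
  simp only [Q_neg, map_neg, LinearMap.neg_apply] at hfst
  rw [W.Qbil_comm c W.one x, W.Qbil_comm c W.one, W.Qbil_comm c W.one] at h hfst
  have e : W.Qbil b x W.one = W.Qbil W.one b x := by rw [← Qbil_one, circ_comm]
  rw [e] at h hfst
  refine smul_right_injective J h2 ?_
  simp only
  linear_combination (norm := module) h + hfst

theorem squareRule_of_qj2LinOne (W : WeakQuadraticJordan k J) (hT : W.QJ2LinOne) :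
    W.SquareRule := by
  intro y x
  have h := hT y x W.one
  have e : W.Qbil x W.one y = W.Qbil W.one y x := by rw [Qbil_comm, circ_comm]
  rw [e] at h
  simp only [circ_one, map_smul, Qbil_self, LinearMap.smul_apply] at h
  linear_combination (norm := module) -h

/-- In characteristic 2, `(1 + b)² = 1 + b²`, so the square rule is `Q_{(1+b)²} = Q_{1+b}²`. -/
theorem squareRule_of_two_eq_zero (W : WeakQuadraticJordan k J) (h2 : (2 : k) = 0) :
    W.SquareRule := by
  intro y x
  have h := W.QJ3_apply (W.one + y) W.one x
  have hfst := W.QJ3_apply y W.one x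
  have hc := W.circ_Q_comm y x
  have hd (z : J) : z + z = 0 := by rw [← two_smul k z, h2, zero_smul]
  simp only [Q_add, Q_one_apply, circ_one, h2, zero_smul, add_zero, map_add] at h hfst
  rw [hfst, hc] at h
  have hd1 := hd (W.Qbil W.one y x)
  have hd2 := hd (W.Q y (W.Qbil W.one y x))
  have hd3 := hd (W.Q y x)
  rw [h2, zero_smul, add_zero]
  linear_combination (norm := module) -h - hd1 - hd2 - hd3

/-- In characteristic 2, `V_{b,b} = V_{b²}`. This is
`Q_b Q_{b + b⁻¹} = Q_{1+b}²`, which holds because `b + b⁻¹ = b⁻¹·Q_{1+b}`. -/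
theorem V_self (W : WeakQuadraticJordan k J) (hdiv : W.IsDivision) (h2 : (2 : k) = 0)
    (b x : J) : W.Qbil b x b = W.Qbil W.one (W.Q b W.one) x := by
  by_cases hb : b = 0
  · simp [hb, Q_zero]
  have hbij := (Module.End.isUnit_iff _).1 (hdiv b hb)
  have hinj := hbij.1
  -- `d` is the inverse of `b`.
  obtain ⟨d, hd⟩ := hbij.2 b
  have sq (z : J) : W.Qbil W.one (W.Q b W.one) z = W.Qbil W.one b (W.Qbil W.one b z) := by
    rw [W.squareRule_of_two_eq_zero h2 b z, h2, zero_smul, add_zero]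
  have hVd : W.Qbil W.one b d = 0 := by
    apply hinj
    have h := W.QJ2 b W.one d
    rw [hd, Qbil_self, h2, zero_smul] at h
    rw [map_zero, circ_comm, ← h]
  have hsum : W.Q (W.one + b) d = d + b := by
    rw [Q_add, Q_one_apply, hd, hVd, add_zero]
  have h3 := W.QJ3_apply (W.one + b) d (W.Q b x)
  rw [hsum] at h3
  -- `Q_{1+b}` commutes with `Q_b`, and `Q_d = Q_b⁻¹`.
  have hcomm (z : J) : W.Q (W.one + b) (W.Q b z) = W.Q b (W.Q (W.one + b) z) := by
    rw [Q_add, Q_add, circ_Q_comm, Q_one_apply, Q_one_apply, map_add, map_add]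
  have hdb (z : J) : W.Q d (W.Q b z) = z := by
    apply hinj
    rw [← QJ3_apply, hd]
  rw [hcomm, hdb] at h3
  have h4 := W.QJ3_apply (W.one + b) W.one x
  rw [Q_one_apply] at h4
  have h5 := W.QJ3_apply b W.one x
  rw [Q_one_apply] at h5
  have hone : W.Q (W.one + b) W.one = W.one + W.Q b W.one := by
    rw [Q_add, Q_one_apply, circ_one, h2, zero_smul, add_zero]
  rw [← h4, hone, Q_add, Q_add, Q_one_apply, hdb, h5] at h3
  have h6 : W.Qbil d b (W.Q b x) = W.Qbil W.one (W.Q b W.one) x := by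
    linear_combination (norm := module) h3
  rw [← h6]
  apply hinj
  rw [← QJ3_bil, hd, W.QJ2, W.Qbil_comm b x]

theorem qj2LinOne_of_two_eq_zero (W : WeakQuadraticJordan k J) (hdiv : W.IsDivision)
    (h2 : (2 : k) = 0) : W.QJ2LinOne := by
  intro c b x
  have hchar (z : J) : z + z = 0 := by rw [← two_smul k z, h2, zero_smul]
  -- Polarizing `V_{b,b} = V_{b²}`.
  have hv : W.Qbil c x b + W.Qbil b x c = W.Qbil W.one (W.Qbil W.one c b) x := by
    have h := W.V_self hdiv h2 (c + b) x
    have hfst := W.V_self hdiv h2 c x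
    have hsnd := W.V_self hdiv h2 b x
    have e : W.Qbil c b W.one = W.Qbil W.one c b := by rw [← Qbil_one, circ_comm]
    simp only [Q_add, map_add, LinearMap.add_apply, e] at h
    linear_combination (norm := module) h - hfst - hsnd
  -- Polarizing the square rule.
  have hs : W.Qbil W.one c (W.Qbil W.one b x) + W.Qbil W.one b (W.Qbil W.one c x)
      = W.Qbil W.one (W.Qbil W.one c b) x := by
    have h := W.squareRule_of_two_eq_zero h2 (c + b) x
    have hfst := W.squareRule_of_two_eq_zero h2 c x
    have hsnd := W.squareRule_of_two_eq_zero h2 b x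
    have e : W.Qbil c b W.one = W.Qbil W.one c b := by rw [← Qbil_one, circ_comm]
    simp only [Q_add, map_add, LinearMap.add_apply, e, h2, zero_smul, add_zero] at h hfst hsnd
    linear_combination (norm := module) h - hfst - hsnd
  have h := W.QJ2_lin_antisymm c W.one b x
  have e : W.Qbil b x W.one = W.Qbil W.one b x := by rw [← Qbil_one, circ_comm]
  have hsymm : W.Qbil W.one (W.Qbil W.one c x) b = W.Qbil W.one b (W.Qbil W.one c x) := circ_comm ..
  rw [W.Qbil_comm c W.one x, W.Qbil_comm c W.one, W.Qbil_comm c W.one, Q_one_apply,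
    Q_one_apply, e, hsymm] at h
  have d1 := hchar (W.Qbil b x c)
  have d2 := hchar (W.Qbil W.one b (W.Qbil W.one c x))
  linear_combination (norm := module) h - hv + hs + d1 - d2

theorem qj2LinOne (W : WeakQuadraticJordan k J) (hdiv : W.IsDivision) : W.QJ2LinOne := by
  by_cases h2 : (2 : k) = 0
  · exact W.qj2LinOne_of_two_eq_zero hdiv h2
  · exact W.qj2LinOne_of_two_ne_zero h2

theorem squareRule (W : WeakQuadraticJordan k J) (hdiv : W.IsDivision) : W.SquareRule :=
  W.squareRule_of_qj2LinOne (W.qj2LinOne hdiv)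

/-! ### Isotopes and the anti-derivation property -/

/-- The `a`-isotope `(J, Q^a, a)` with `Q^a_y = Q_a⁻¹ Q_y` (first `Q_a⁻¹`, then `Q_y`);
`q` is the inverse of `Q_a`. -/
def isotope (W : WeakQuadraticJordan k J) (a : J) (q : Module.End k J)
    (h1 : W.Q a * q = 1) (h2 : q * W.Q a = 1) : WeakQuadraticJordan k J where
  Q y := W.Q y * q
  one := a
  one_ne_zero := by
    rintro rfl
    rw [Q_zero, zero_mul] at h1
    exact W.one_ne_zero (by simpa using (LinearMap.congr_fun h1 W.one).symm)
  Q_smul t y := by rw [W.Q_smul, smul_mul_assoc]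
  Qbil := W.Qbil.compr₂ (LinearMap.mulRight k q)
  Qbil_apply y z := by simp [W.Qbil_apply, sub_mul]
  QJ1 := h1
  QJ2 y b x := by
    have r (z : J) : W.Q a (q z) = z := LinearMap.congr_fun h1 z
    have l (z : J) : q (W.Q a z) = z := LinearMap.congr_fun h2 z
    have e : q (W.Qbil b x (q y)) = W.Qbil (q b) (q x) y := by
      have h := W.QJ3_bil a (q b) (q x) (q y)
      rw [r, r, r] at h
      rw [h, l]
    simp [e, W.QJ2]
  QJ3 y z := by
    have r (z : J) : W.Q a (q z) = z := LinearMap.congr_fun h1 z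
    have l (z : J) : q (W.Q a z) = z := LinearMap.congr_fun h2 z
    ext x
    have h := W.QJ3_apply a (q z) (q (W.Q y (q x)))
    rw [r, r] at h
    simp [QJ3_apply, h, l]

theorem isotope_isDivision (W : WeakQuadraticJordan k J) (hdiv : W.IsDivision) (a : J)
    (q : Module.End k J) (h1 : W.Q a * q = 1) (h2 : q * W.Q a = 1) :
    (W.isotope a q h1 h2).IsDivision := fun y hy =>
  (hdiv y hy).mul (isUnit_iff_exists.2 ⟨_, h2, h1⟩)

/-- The polarized square rule of the `c`-isotope, evaluated at `1` and `b·Q_c`. -/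
theorem squareRule_isotope (W : WeakQuadraticJordan k J) (hdiv : W.IsDivision) (c b x : J) :
    W.Qbil c (W.Qbil W.one c b) x + (2 : k) • W.Qbil W.one (W.Q c b) x
      = W.Qbil W.one c (W.Qbil b x c) + W.Qbil c (W.Qbil W.one c x) b := by
  by_cases hc : c = 0
  · simp [hc, Q_zero]
  obtain ⟨q, h1, h2⟩ := isUnit_iff_exists.1 (hdiv c hc)
  have r (z : J) : W.Q c (q z) = z := LinearMap.congr_fun h1 z
  have l (z : J) : q (W.Q c z) = z := LinearMap.congr_fun h2 z
  have S := (W.isotope c q h1 h2).squareRule (W.isotope_isDivision hdiv c q h1 h2)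
  have hS (y z : J) : W.Qbil c y (q (W.Qbil c y (q z)))
      = W.Qbil c (W.Q y (q c)) (q z) + (2 : k) • W.Q y (q z) := S y z
  -- `V_{c,b} = Q_c⁻¹ Q_{c, b·Q_c}` and `V_{b,c} = Q_{c, b·Q_c} Q_c⁻¹`.
  have e1 (z : J) : q (W.Qbil c (W.Q c b) z) = W.Qbil b z c := by
    rw [W.QJ2, l, Qbil_comm]
  have e2 (z : J) : W.Qbil c (W.Q c b) (q z) = W.Qbil c z b := by
    have h := W.QJ2 c b (q z)
    rw [r] at h
    rw [W.QJ2, h, W.Qbil_comm b]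
  have e3 : W.Qbil W.one (W.Q c b) (q c) = W.Qbil W.one c b := by
    have h : W.Qbil c (W.Q c b) (q W.one) = W.Qbil W.one (W.Q c b) (q c) :=
      (W.isotope c q h1 h2).Qbil_one (W.Q c b) W.one
    rw [← h, e2, Qbil_comm]
  have hA := hS (W.one + W.Q c b) (W.Q c x)
  have hB := hS W.one (W.Q c x)
  have hC := hS (W.Q c b) (W.Q c x)
  simp only [Q_add, map_add, LinearMap.add_apply, l, e1, e2, e3] at hA hB hC
  simp only [W.Qbil_comm c W.one] at hA hB
  linear_combination (norm := module) hB + hC - hA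

/-- The isotope identity for the trivial isotope: `V_b` is an anti-derivation. -/
theorem circ_antiderivation (W : WeakQuadraticJordan k J) (hdiv : W.IsDivision) (b x y : J) :
    W.Qbil W.one b (W.Q y x)
      = -W.Q y (W.Qbil W.one b x) + W.Qbil y (W.Qbil W.one b y) x := by
  have h1 := W.squareRule_isotope hdiv y b x
  have h2 := W.qj2LinOne hdiv y b x
  have h3 := W.qj2LinOne hdiv y x b
  rw [W.circ_comm x b, W.Qbil_comm x b, W.circ_comm (W.Q y b) x] at h3
  rw [W.circ_comm (W.Q y b) x] at h1
  rw [W.circ_comm (W.Q y x) b] at h2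
  rw [W.circ_comm b y]
  linear_combination (norm := module) h1 + h2 - (2 : k) • h3

end WeakQuadraticJordan

/-- In a weak quadratic Jordan division algebra, for `a` invertible and `b ∈ J`, the map
`δ := Q_a⁻¹ Q_{a,b}` is an anti-derivation of the `a`-isotope `J^a`
(where `x·Q^a_y := x·Q_a⁻¹·Q_y` and `Q^a_{y,c} = Q_a⁻¹ Q_{y,c}`). -/
theorem isotope_antiderivation {k J : Type*} [Field k] [AddCommGroup J] [Module k J]
    (W : WeakQuadraticJordan k J) (hdiv : W.IsDivision)
    (a : J) (ha : IsUnit (W.Q a)) (b : J) :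
    ∀ x y : J,
      (W.Qbil a b * (↑ha.unit⁻¹ : Module.End k J))
          ((W.Q y * (↑ha.unit⁻¹ : Module.End k J)) x)
        = -((W.Q y * (↑ha.unit⁻¹ : Module.End k J))
              ((W.Qbil a b * (↑ha.unit⁻¹ : Module.End k J)) x))
          + (W.Qbil y ((W.Qbil a b * (↑ha.unit⁻¹ : Module.End k J)) y)
              * (↑ha.unit⁻¹ : Module.End k J)) x := by
  intro x y
  exact (W.isotope a _ ha.mul_val_inv ha.val_inv_mul).circ_antiderivation
    (W.isotope_isDivision hdiv a _ _ _) b x y
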